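/- Let k ≥ 2 and n_1, …, n_k be positive integers, let t be the number of indices i with n_i odd, let I_1 = {i : n_i = 1}, and let I_2 = {i : n_i = 2}. If t is even, t ≥ 4, and |I_1| + |I_2| ≤ t/2, then the signed domination number of the complete k-partite graph K_{n_1,…,n_k} equals 4. -/

import Mathlib

open scoped Classical

/-- The signed domination number of a finite simple graph `G`: the minimum weight of a
function `f : V → {−1, 1}` such that `f(N[v]) ≥ 1` for every vertex `v`. -/
noncomputable def signedDomNum {V : Type*} [Fintype V] (G : SimpleGraph V) : ℤ :=
  sInf {w : ℤ | ∃ f : V → ℤ, (∀ v, f v = 1 ∨ f v = -1) ∧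
    (∀ v, 1 ≤ f v + ∑ u ∈ G.neighborFinset v, f u) ∧ w = ∑ v, f v}

theorem sum_neighborFinset_completeMultipartiteGraph {ι : Type*} [Fintype ι] {V : ι → Type*}
    [∀ i, Fintype (V i)] (f : (Σ i, V i) → ℤ) (v : Σ i, V i)
    [Fintype ((SimpleGraph.completeMultipartiteGraph V).neighborSet v)] :
    ∑ u ∈ (SimpleGraph.completeMultipartiteGraph V).neighborFinset v, f u
      = (∑ i, ∑ x, f ⟨i, x⟩) - ∑ x, f ⟨v.1, x⟩ := by
  have hfilter : (SimpleGraph.completeMultipartiteGraph V).neighborFinset v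
      = Finset.univ.filter fun u => v.1 ≠ u.1 := by
    ext u
    simp [SimpleGraph.completeMultipartiteGraph]
  rw [hfilter, Finset.sum_filter, Fintype.sum_sigma, eq_sub_iff_add_eq,
    ← Finset.sum_erase_add _ _ (Finset.mem_univ v.1),
    ← Finset.sum_erase_add (a := v.1) _ (fun i => ∑ x, f ⟨i, x⟩) (Finset.mem_univ v.1)]
  have herase : ∀ i ∈ Finset.univ.erase v.1,
      (∑ x : V i, if v.1 ≠ i then f ⟨i, x⟩ else 0) = ∑ x, f ⟨i, x⟩ := by
    intro i hi
    simp [(Finset.ne_of_mem_erase hi).symm]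
  rw [Finset.sum_congr rfl herase]
  simp

theorem exists_eq_neg_one_or_sum_eq_card {α : Type*} [Fintype α] {f : α → ℤ}
    (hf : ∀ x, f x = 1 ∨ f x = -1) :
    (∃ x, f x = -1) ∨ ∑ x, f x = Fintype.card α := by
  by_cases h : ∃ x, f x = -1
  · exact Or.inl h
  · push Not at h
    right
    simp [fun x => (hf x).resolve_right (h x)]

theorem sum_le_card_of_eq_one_or_neg_one {α : Type*} [Fintype α] {f : α → ℤ}
    (hf : ∀ x, f x = 1 ∨ f x = -1) : ∑ x, f x ≤ Fintype.card α := by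
  have h : ∑ x, f x ≤ ∑ _x : α, (1 : ℤ) :=
    Finset.sum_le_sum fun x _ => by rcases hf x with h | h <;> omega
  simpa using h

theorem odd_sum_int_iff_odd_card_odd {α : Type*} [Fintype α] (f : α → ℤ) :
    Odd (∑ x, f x) ↔ Odd (Finset.univ.filter fun x => Odd (f x)).card := by
  have h : Even (∑ x, (f x - if Odd (f x) then 1 else 0)) :=
    Finset.even_sum _ fun x _ => by
      split_ifs with hx
      · exact hx.sub_odd odd_one
      · simpa using hx
  rw [Finset.sum_sub_distrib, Finset.sum_boole, Int.even_sub'] at h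
  exact h.trans (Int.odd_coe_nat _)

theorem odd_sum_iff_odd_card {α : Type*} [Fintype α] {f : α → ℤ}
    (hf : ∀ x, f x = 1 ∨ f x = -1) : Odd (∑ x, f x) ↔ Odd (Fintype.card α) := by
  have h : Finset.univ.filter (fun x => Odd (f x)) = Finset.univ :=
    Finset.filter_true_of_mem fun x _ => by rcases hf x with h | h <;> simp [h]
  rw [odd_sum_int_iff_odd_card_odd, h, Finset.card_univ]

theorem four_le_sum_of_signed_dominating {k : ℕ} (hk : 0 < k) {n : Fin k → ℕ} (hn : ∀ i, 0 < n i)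
    (heven : Even (Finset.univ.filter fun i => Odd (n i)).card)
    (hI : 2 * ((Finset.univ.filter fun i => n i = 1).card
      + (Finset.univ.filter fun i => n i = 2).card)
        ≤ (Finset.univ.filter fun i => Odd (n i)).card)
    {f : (Σ i, Fin (n i)) → ℤ} (hf : ∀ v, f v = 1 ∨ f v = -1)
    (hdom : ∀ v, 1 ≤ f v + ((∑ i, ∑ x, f ⟨i, x⟩) - ∑ x, f ⟨v.1, x⟩)) :
    4 ≤ ∑ i, ∑ x, f ⟨i, x⟩ := by
  obtain ⟨s, hs⟩ : ∃ s : Fin k → ℤ, ∀ i, ∑ x, f ⟨i, x⟩ = s i := ⟨_, fun _ => rfl⟩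
  simp only [hs] at hdom ⊢
  have hodd : ∀ i, Odd (s i) ↔ Odd (n i) := fun i => by
    simpa [hs] using odd_sum_iff_odd_card fun x => hf ⟨i, x⟩
  have hWeven : Even (∑ i, s i) := by
    rw [← Int.not_odd_iff_even, odd_sum_int_iff_odd_card_odd, Nat.not_odd_iff_even]
    simpa [hodd] using heven
  obtain ⟨W, hW⟩ : ∃ W, ∑ i, s i = W := ⟨_, rfl⟩
  rw [hW] at hWeven ⊢
  simp only [hW] at hdom
  have hpart : ∀ i, s i ≤ W - 2 ∨ (s i = n i ∧ s i ≤ W) := by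
    intro i
    rcases exists_eq_neg_one_or_sum_eq_card fun x => hf ⟨i, x⟩ with ⟨x, hx⟩ | h
    · have := hdom ⟨i, x⟩
      left
      dsimp only at this
      omega
    · right
      have hcard : s i = n i := by simpa [hs] using h
      have := hdom ⟨i, ⟨0, hn i⟩⟩
      dsimp only at this
      refine ⟨hcard, ?_⟩
      rcases hf ⟨i, ⟨0, hn i⟩⟩ with h0 | h0 <;> omega
  by_contra! hlt
  have hW2 : W ≤ 2 := by
    obtain ⟨a, ha⟩ := hWeven
    omega
  have hbound : ∀ i, s i ≤ 2 * ((if n i = 1 then 1 else 0) + (if n i = 2 then 1 else 0))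
      - (if Odd (n i) then 1 else 0) := by
    intro i
    have hle : s i ≤ n i := by
      simpa [hs] using sum_le_card_of_eq_one_or_neg_one fun x => hf ⟨i, x⟩
    have hpos := hn i
    by_cases h1 : n i = 1
    · simpa [h1] using hle
    by_cases h2 : n i = 2
    · simpa [h2, show ¬ Odd 2 by decide] using hle
    have hs0 : s i ≤ 0 := by
      rcases hpart i with h | h <;> omega
    by_cases ho : Odd (n i)
    · obtain ⟨a, ha⟩ := (hodd i).2 ho
      simp only [h1, h2, ho, if_true, if_false]
      omega
    · simp [h1, h2, ho, hs0]
  have hW0 : W ≤ 0 := by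
    have hsum := Finset.sum_le_sum fun i (_ : i ∈ Finset.univ) => hbound i
    rw [hW, Finset.sum_sub_distrib, ← Finset.mul_sum, Finset.sum_add_distrib, Finset.sum_boole,
      Finset.sum_boole, Finset.sum_boole] at hsum
    omega
  have hsmall : ∀ i, s i ≤ W - 2 := by
    intro i
    have hpos := hn i
    rcases hpart i with h | h <;> omega
  have hsum := Finset.sum_le_sum fun i (_ : i ∈ Finset.univ) => hsmall i
  simp only [hW, Finset.sum_const, Finset.card_univ, Fintype.card_fin, nsmul_eq_mul] at hsum
  have hk' : (1 : ℤ) ≤ k := by exact_mod_cast hk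
  nlinarith

theorem exists_signed_of_four_le_card_odd {k : ℕ} (n : Fin k → ℕ)
    (heven : Even (Finset.univ.filter fun i => Odd (n i)).card)
    (h4 : 4 ≤ (Finset.univ.filter fun i => Odd (n i)).card) :
    ∃ f : (Σ i, Fin (n i)) → ℤ, (∀ v, f v = 1 ∨ f v = -1) ∧
      (∀ i, ∑ x, f ⟨i, x⟩ ≤ 1) ∧ ∑ i, ∑ x, f ⟨i, x⟩ = 4 := by
  set O := Finset.univ.filter fun i => Odd (n i) with hO
  obtain ⟨m, hm⟩ := heven
  obtain ⟨A, hAO, hA⟩ := Finset.exists_subset_card_eq (s := O) (n := m - 2) (by omega)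
  have hsum : ∀ i, ∑ x : Fin (n i), (if i ∈ A then -1 else 1) * (-1 : ℤ) ^ (x : ℕ)
      = (if i ∈ O then 1 else 0) - 2 * (if i ∈ A then 1 else 0) := by
    intro i
    rw [← Finset.mul_sum, Fin.sum_neg_one_pow]
    by_cases hiA : i ∈ A
    · have ho : Odd (n i) := by simpa [hO] using hAO hiA
      simp [hiA, hAO hiA, Nat.not_even_iff_odd.2 ho]
    · by_cases ho : Odd (n i)
      · simp [hiA, hO, ho, Nat.not_even_iff_odd.2 ho]
      · simp [hiA, hO, ho, Nat.not_odd_iff_even.1 ho]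
  refine ⟨fun v => (if v.1 ∈ A then -1 else 1) * (-1) ^ (v.2 : ℕ), fun v => ?_, fun i => ?_, ?_⟩
  · rcases neg_one_pow_eq_or ℤ (v.2 : ℕ) with h | h <;> by_cases hv : v.1 ∈ A <;> simp [h, hv]
  · rw [hsum i]
    split_ifs <;> norm_num
  · simp only [hsum]
    rw [Finset.sum_sub_distrib, ← Finset.mul_sum, Finset.sum_boole, Finset.sum_boole,
      Finset.filter_univ_mem, Finset.filter_univ_mem, hA]
    omega

theorem signedDomNum_eq_four_t_ge_four
    (k : ℕ) (hk : 2 ≤ k) (n : Fin k → ℕ) (hn : ∀ i, 0 < n i)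
    (t : ℕ) (ht : t = (Finset.univ.filter fun i => Odd (n i)).card)
    (hteven : Even t) (ht4 : 4 ≤ t)
    (hI : 2 * ((Finset.univ.filter fun i => n i = 1).card
      + (Finset.univ.filter fun i => n i = 2).card) ≤ t) :
    signedDomNum (SimpleGraph.completeMultipartiteGraph fun i : Fin k => Fin (n i)) = 4 := by
  subst ht
  refine IsLeast.csInf_eq ⟨?_, ?_⟩
  · obtain ⟨f, hf, hle, hsum⟩ := exists_signed_of_four_le_card_odd n hteven ht4
    refine ⟨f, hf, fun v => ?_, ?_⟩
    · rw [sum_neighborFinset_completeMultipartiteGraph, hsum]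
      have := hle v.1
      rcases hf v with h | h <;> omega
    · rw [Fintype.sum_sigma, hsum]
  · rintro w ⟨f, hf, hdom, rfl⟩
    rw [Fintype.sum_sigma]
    refine four_le_sum_of_signed_dominating (by omega) hn hteven hI hf fun v => ?_
    have hv := hdom v
    rwa [sum_neighborFinset_completeMultipartiteGraph] at hv
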